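/- Let $p$ be an odd prime and $F$ a field of characteristic $p$. The group algebra $F[C_2 \wr S_n]$ is Morita equivalent to the direct sum $\bigoplus_{i=0}^n F[S_i \times S_{n-i}]$. -/

import Mathlib

/-!
STATEMENT 11: Let `p` be an odd prime and `F` a field of characteristic `p`.  The
group algebra `F[C₂ ≀ Sₙ]` is Morita equivalent to `⊕_{i=0}^n F[Sᵢ × S_{n-i}]`.

We realize `C₂ ≀ Sₙ` as the centraliser of the bar involution on `Fin n × Bool`,
the direct sum of the group algebras as the product ring
`Π i : Fin (n+1), F[S_i × S_{n-i}]`, and Morita equivalence as an equivalence of the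
categories of modules.
-/

def barPerm (n : ℕ) : Equiv.Perm (Fin n × Bool) :=
  Function.Involutive.toPerm (fun x => (x.1, !x.2)) (by intro x; simp)

def hyperoct (n : ℕ) : Subgroup (Equiv.Perm (Fin n × Bool)) :=
  Subgroup.centralizer {barPerm n}

/-!
Clifford theory. Since `2` is invertible, the group algebra of the base group `C₂ ^ n` is the
product of `2 ^ n` copies of the ground ring `R`, with one idempotent `e_x` for each character `x`,
and `Sₙ` permutes these idempotents. So `A = R[C₂ ≀ Sₙ]` is the skew group algebra of `Sₙ` over the
functions on the set of characters. The orbit of a character is determined by how many of its signs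
are `+1`; let `x_0, …, x_n` represent the orbits and put `e = ∑ i, e_{x_i}`. The conjugates of the
`e_{x_i}` are all the `e_x`, whose sum is `1`, so `e` generates the unit ideal and `A` is Morita
equivalent to its corner `e A e`. As `e_x A e_y = 0` for `x` and `y` in different orbits, that
corner is the product of the corners `e_{x_i} A e_{x_i}`, which are the group algebras of the
stabilizers `S_i × S_{n-i}`.
-/

universe u v w

section CornerEmbedding

open CategoryTheory
open scoped ModuleCat.Algebra

variable {R : Type*} [CommRing R]
  {A : Type u} [Ring A] [Algebra R A] {B : Type v} [Ring B] [Algebra R B]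

/-- `φ` identifies the unital algebra `B` with the corner `e * A * e`, where `e = φ 1`; this `e` is
idempotent because `φ` is multiplicative. Keeping `B` apart from the subset `e * A * e` of `A` lets
`B` be a product of group algebras. -/
structure IsCornerEmbedding (φ : B →ₙₐ[R] A) : Prop where
  injective : Function.Injective φ
  exists_apply_eq (a : A) : ∃ b, φ b = φ 1 * a * φ 1

/-- The corner `e • M` of an `A`-module `M`, where `e = φ 1`; it is a `B`-module. -/
def corner (φ : B →ₙₐ[R] A) (M : Type*) [AddCommGroup M] [Module A M] : AddSubgroup M :=
  (DistribSMul.toAddMonoidHom M (φ 1)).eqLocus (.id M)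

variable {φ : B →ₙₐ[R] A}

section Module

variable {M N : Type*} [AddCommGroup M] [Module A M] [AddCommGroup N] [Module A N]

theorem mem_corner {m : M} : m ∈ corner φ M ↔ φ 1 • m = m := Iff.rfl

theorem smul_mem_corner (b : B) (m : M) : φ b • m ∈ corner φ M := by
  rw [mem_corner, smul_smul, ← map_mul, one_mul]

theorem apply_mem_corner (b : B) : φ b ∈ corner φ A := by
  rw [mem_corner, smul_eq_mul, ← map_mul, one_mul]

instance : Module B (corner φ M) where
  smul b m := ⟨φ b • (m : M), smul_mem_corner b _⟩
  one_smul m := Subtype.ext m.2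
  mul_smul a b m := Subtype.ext <| (congr_arg (· • (m : M)) (map_mul φ a b)).trans (mul_smul ..)
  smul_zero b := Subtype.ext (smul_zero (φ b))
  smul_add b x y := Subtype.ext (smul_add (φ b) (x : M) (y : M))
  add_smul a b m := Subtype.ext <| (congr_arg (· • (m : M)) (map_add φ a b)).trans (add_smul ..)
  zero_smul m := Subtype.ext <| (congr_arg (· • (m : M)) (map_zero φ)).trans (zero_smul ..)

@[simp]
theorem corner.coe_smul (b : B) (m : corner φ M) : ((b • m : corner φ M) : M) = φ b • (m : M) :=
  rfl

variable (φ) in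
/-- The restriction of an `A`-linear map to corners. -/
def cornerMap (f : M →ₗ[A] N) : corner φ M →ₗ[B] corner φ N where
  toFun m := ⟨f m, by rw [mem_corner, ← map_smul, mem_corner.1 m.2]⟩
  map_add' x y := Subtype.ext (map_add f (x : M) y)
  map_smul' b x := Subtype.ext (map_smul f (φ b) (x : M))

end Module

variable (φ) in
/-- The functor `M ↦ e • M` from `A`-modules to `B`-modules. -/
def cornerFunctor : ModuleCat.{w} A ⥤ ModuleCat.{w} B where
  obj M := ModuleCat.of B (corner φ M)
  map f := ModuleCat.ofHom (cornerMap φ f.hom)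

instance : (cornerFunctor.{u, v, w} φ).Linear R where
  map_smul {M N} f r := by
    refine ModuleCat.hom_ext <| LinearMap.ext fun (m : corner φ M) ↦ Subtype.ext ?_
    change r • f.hom (m : M) = φ (algebraMap R B r) • f.hom (m : M)
    rw [Algebra.algebraMap_eq_smul_one, map_smul, smul_assoc, ← map_smul f.hom, mem_corner.1 m.2]

section Full

variable {M N : Type*} [AddCommGroup M] [Module A M] [AddCommGroup N] [Module A N]

theorem mem_of_forall_smul_smul_mem (hfull : TwoSidedIdeal.span {φ 1} = ⊤) {S : Submodule A M}
    {m : M} (h : ∀ a : A, φ 1 • a • m ∈ S) : m ∈ S := by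
  have key : ∀ x ∈ TwoSidedIdeal.span {φ 1}, ∀ a : A, x • a • m ∈ S := by
    intro x hx
    induction hx using TwoSidedIdeal.span_induction with
    | mem x hx => rwa [Set.mem_singleton_iff.1 hx]
    | zero => simp
    | add x y _ _ hx hy => exact fun a ↦ by rw [add_smul]; exact S.add_mem (hx a) (hy a)
    | neg x _ hx => exact fun a ↦ by rw [neg_smul]; exact S.neg_mem (hx a)
    | left_absorb b x _ hx => exact fun a ↦ by rw [mul_smul]; exact S.smul_mem b (hx a)
    | right_absorb b x _ hx => exact fun a ↦ by rw [mul_smul, smul_smul b]; exact hx (b * a)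
  simpa using key 1 (hfull ▸ TwoSidedIdeal.mem_top A) 1

theorem cornerMap_injective (hfull : TwoSidedIdeal.span {φ 1} = ⊤) :
    Function.Injective (cornerMap φ : (M →ₗ[A] N) → _) := by
  intro f g hfg
  ext m
  refine mem_of_forall_smul_smul_mem (S := LinearMap.eqLocus f g) hfull fun a ↦ ?_
  exact congr_arg Subtype.val (LinearMap.congr_fun hfg ⟨_, smul_mem_corner 1 (a • m)⟩)

/-- The submodule of `M × N` generated by the graph of a `B`-linear map `g` between corners; it
turns out to be the graph of the `A`-linear extension of `g`. -/
def cornerGraph (g : corner φ M →ₗ[B] corner φ N) : Submodule A (M × N) :=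
  Submodule.span A (Set.range fun m : corner φ M ↦ ((m : M), (g m : N)))

theorem apply_smul_fst_of_mem_cornerGraph (hφ : IsCornerEmbedding φ)
    {g : corner φ M →ₗ[B] corner φ N} {z : M × N} (hz : z ∈ cornerGraph g) (a : A) :
    (g ⟨φ 1 • a • z.1, smul_mem_corner 1 _⟩ : N) = φ 1 • a • z.2 := by
  induction hz using Submodule.span_induction generalizing a with
  | mem z hz =>
    obtain ⟨m, rfl⟩ := hz
    obtain ⟨b, hb⟩ := hφ.exists_apply_eq a
    have hbm : b • m = ⟨φ 1 • a • (m : M), smul_mem_corner 1 _⟩ := Subtype.ext <| by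
      rw [corner.coe_smul, hb, mul_smul, mul_smul, mem_corner.1 m.2]
    rw [← hbm, map_smul, corner.coe_smul, hb, mul_smul, mul_smul, mem_corner.1 (g m).2]
  | zero =>
    simp only [Prod.fst_zero, Prod.snd_zero, smul_zero]
    exact congr_arg Subtype.val (map_zero g)
  | add y z _ _ hy hz =>
    rw [Prod.snd_add, smul_add, smul_add, ← hy, ← hz, ← AddSubgroup.coe_add, ← map_add]
    simp only [Prod.fst_add, smul_add, AddMemClass.mk_add_mk]
  | smul c z _ hz => simpa [mul_smul] using hz (a * c)

theorem cornerGraph_fst_bijective (hφ : IsCornerEmbedding φ)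
    (hfull : TwoSidedIdeal.span {φ 1} = ⊤) (g : corner φ M →ₗ[B] corner φ N) :
    Function.Bijective (LinearMap.fst A M N ∘ₗ (cornerGraph g).subtype) := by
  constructor
  · rw [← LinearMap.ker_eq_bot, LinearMap.ker_eq_bot']
    rintro ⟨⟨x, y⟩, hz⟩ (rfl : x = 0)
    have hy : y ∈ (⊥ : Submodule A N) := mem_of_forall_smul_smul_mem hfull fun a ↦ by
      rw [Submodule.mem_bot, ← apply_smul_fst_of_mem_cornerGraph hφ hz a]
      simp only [smul_zero]
      exact congr_arg Subtype.val (map_zero g)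
    simpa using hy
  · rw [← LinearMap.range_eq_top, LinearMap.range_comp, Submodule.range_subtype, eq_top_iff]
    refine fun x _ ↦ mem_of_forall_smul_smul_mem hfull fun a ↦ ?_
    let m : corner φ M := ⟨_, smul_mem_corner 1 (a • x)⟩
    exact ⟨(m, g m), Submodule.subset_span ⟨m, rfl⟩, rfl⟩

theorem cornerMap_surjective (hφ : IsCornerEmbedding φ) (hfull : TwoSidedIdeal.span {φ 1} = ⊤) :
    Function.Surjective (cornerMap φ : (M →ₗ[A] N) → _) := by
  intro g
  let e := LinearEquiv.ofBijective _ (cornerGraph_fst_bijective hφ hfull g)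
  refine ⟨LinearMap.snd A M N ∘ₗ (cornerGraph g).subtype ∘ₗ e.symm.toLinearMap, ?_⟩
  ext m
  have he : e.symm m = ⟨((m : M), (g m : N)), Submodule.subset_span ⟨m, rfl⟩⟩ :=
    e.symm_apply_eq.2 rfl
  exact congr_arg (fun z ↦ z.1.2) he

end Full

section Coinduced

variable (φ) in
/-- The `A`-module coinduced from a `B`-module `N`: the `B`-linear maps `e * A → N`, on which `A`
acts through right multiplication on `e * A`. -/
def CornerCoind (N : Type*) [AddCommGroup N] [Module B N] : Type _ :=
  corner φ A →ₗ[B] N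

variable {N : Type*} [AddCommGroup N] [Module B N]

instance : AddCommGroup (CornerCoind φ N) := inferInstanceAs (AddCommGroup (corner φ A →ₗ[B] N))

instance : FunLike (CornerCoind φ N) (corner φ A) N :=
  inferInstanceAs (FunLike (corner φ A →ₗ[B] N) _ _)

instance : LinearMapClass (CornerCoind φ N) B (corner φ A) N :=
  inferInstanceAs (LinearMapClass (corner φ A →ₗ[B] N) _ _ _)

instance : Module A (CornerCoind φ N) where
  smul a h := LinearMap.comp h (cornerMap φ (LinearMap.toSpanSingleton A A a))
  one_smul h := LinearMap.ext fun x ↦ congr_arg h (Subtype.ext (mul_one (x : A)))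
  mul_smul a b h := LinearMap.ext fun x ↦ congr_arg h (Subtype.ext (mul_assoc (x : A) a b).symm)
  smul_zero _ := rfl
  smul_add _ _ _ := rfl
  add_smul a b h := LinearMap.ext fun x ↦
    (congr_arg h (Subtype.ext (mul_add (x : A) a b))).trans (map_add h _ _)
  zero_smul h := LinearMap.ext fun x ↦
    (congr_arg h (Subtype.ext (mul_zero (x : A)))).trans (map_zero h)

variable (φ N) in
/-- Evaluation at `e`, as a map from the corner of the coinduced module. -/
def evalCornerCoind : corner φ (CornerCoind φ N) →ₗ[B] N where
  toFun h := (h : CornerCoind φ N) ⟨φ 1, apply_mem_corner 1⟩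
  map_add' _ _ := rfl
  map_smul' b h := by
    refine (congr_arg (h : CornerCoind φ N) (Subtype.ext ?_)).trans (map_smul h.1 b _)
    change φ 1 * φ b = φ b * φ 1
    rw [← map_mul, ← map_mul, one_mul, mul_one]

theorem IsCornerEmbedding.exists_linearMap_apply_eq_mul (hφ : IsCornerEmbedding φ) :
    ∃ r : corner φ A →ₗ[B] B, ∀ x, φ (r x) = x * φ 1 := by
  have h (x : corner φ A) : ∃ b, φ b = x * φ 1 := by
    simpa only [← smul_eq_mul (φ 1), mem_corner.1 x.2] using hφ.exists_apply_eq (x : A)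
  choose r hr using h
  refine ⟨⟨⟨r, fun x y ↦ hφ.injective ?_⟩, fun b x ↦ hφ.injective ?_⟩, hr⟩
  · rw [map_add, hr, hr, hr, AddSubgroup.coe_add, add_mul]
  · rw [RingHom.id_apply, smul_eq_mul, map_mul, hr, hr, corner.coe_smul, smul_eq_mul, mul_assoc]

theorem evalCornerCoind_bijective (hφ : IsCornerEmbedding φ) :
    Function.Bijective (evalCornerCoind φ N) := by
  obtain ⟨r, hr⟩ := hφ.exists_linearMap_apply_eq_mul
  constructor
  · refine LinearMap.ker_eq_bot.1 <| LinearMap.ker_eq_bot'.2 fun h hh ↦ Subtype.ext ?_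
    refine LinearMap.ext fun x ↦ ?_
    have hx : h.1 x = h.1 (r x • ⟨φ 1, apply_mem_corner 1⟩) := by
      refine (DFunLike.congr_fun h.2 x).symm.trans (congr_arg h.1 (Subtype.ext ?_))
      change (x : A) * φ 1 = φ (r x) * φ 1
      rw [hr, mul_assoc, ← map_mul, one_mul]
    rw [map_smul] at hx
    exact hx.trans ((congr_arg (r x • ·) hh).trans (smul_zero _))
  · intro n
    let h : CornerCoind φ N := LinearMap.toSpanSingleton B N n ∘ₗ r
    have hr_one : r ⟨φ 1, apply_mem_corner 1⟩ = 1 :=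
      hφ.injective <| (hr _).trans (by rw [← map_mul, one_mul])
    have hr_mul (x : corner φ A) (hx : (x : A) * φ 1 ∈ corner φ A) : r ⟨x * φ 1, hx⟩ = r x :=
      hφ.injective <| by rw [hr, hr, mul_assoc, ← map_mul, one_mul]
    refine ⟨⟨h, LinearMap.ext fun x ↦ congr_arg (· • n) (hr_mul x _)⟩, ?_⟩
    exact (congr_arg (· • n) hr_one).trans (one_smul B n)

end Coinduced

theorem IsCornerEmbedding.isMoritaEquivalent (hφ : IsCornerEmbedding φ)
    (hfull : TwoSidedIdeal.span {φ 1} = ⊤) : IsMoritaEquivalent R A B := by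
  let F := cornerFunctor.{u, v, max u v} φ
  have : F.Faithful := ⟨fun h ↦ ModuleCat.hom_ext <|
    cornerMap_injective hfull <| congr_arg ModuleCat.Hom.hom h⟩
  have : F.Full := ⟨fun g ↦ (cornerMap_surjective hφ hfull g.hom).imp' ModuleCat.ofHom
    fun _ hf ↦ ModuleCat.hom_ext hf⟩
  have : F.EssSurj := ⟨fun N ↦ ⟨.of A (CornerCoind φ N),
    ⟨(LinearEquiv.ofBijective _ (evalCornerCoind_bijective hφ)).toModuleIso⟩⟩⟩
  have : F.IsEquivalence := {}
  exact ⟨⟨F.asEquivalence, inferInstanceAs (F.Linear R)⟩⟩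

end CornerEmbedding

section Peirce

variable {R : Type*} [CommRing R] {A : Type*} [Ring A] [Algebra R A]
  {ι : Type*} {B : ι → Type*} [∀ i, Ring (B i)] [∀ i, Algebra R (B i)]
  {ψ : ∀ i, B i →ₙₐ[R] A}

theorem apply_mul_mul_apply_eq_zero {i j : ι} (h : ∀ a, ψ i 1 * a * ψ j 1 = 0)
    (b : B i) (a : A) (c : B j) : ψ i b * a * ψ j c = 0 := by
  rw [← mul_one b, ← one_mul c, map_mul, map_mul]
  calc ψ i b * ψ i 1 * a * (ψ j 1 * ψ j c) = ψ i b * (ψ i 1 * a * ψ j 1) * ψ j c := by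
        simp only [mul_assoc]
    _ = 0 := by rw [h, mul_zero, zero_mul]

variable [Fintype ι]

/-- The sum `b ↦ ∑ i, ψ i (b i)` of non-unital homomorphisms whose images annihilate each other. -/
def piCornerHom (ψ : ∀ i, B i →ₙₐ[R] A) (horth : Pairwise fun i j ↦ ∀ a, ψ i 1 * a * ψ j 1 = 0) :
    (Π i, B i) →ₙₐ[R] A where
  toFun b := ∑ i, ψ i (b i)
  map_smul' r b := by simp only [Pi.smul_apply, map_smul, Finset.smul_sum, MonoidHom.id_apply]
  map_zero' := by simp
  map_add' b c := by simp [Finset.sum_add_distrib]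
  map_mul' b c := by
    classical
    have hmul (i j : ι) (hij : j ≠ i) : ψ i (b i) * ψ j (c j) = 0 := by
      simpa using apply_mul_mul_apply_eq_zero (horth hij.symm) (b i) 1 (c j)
    rw [Finset.sum_mul_sum]
    refine Finset.sum_congr rfl fun i _ ↦ ?_
    rw [Fintype.sum_eq_single i (hmul i), Pi.mul_apply, map_mul]

variable {horth : Pairwise fun i j ↦ ∀ a, ψ i 1 * a * ψ j 1 = 0}

theorem piCornerHom_apply (b : Π i, B i) : piCornerHom ψ horth b = ∑ i, ψ i (b i) := rfl

theorem apply_one_mul_piCornerHom_mul (b : Π i, B i) (i : ι) :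
    ψ i 1 * piCornerHom ψ horth b = ψ i (b i) := by
  rw [piCornerHom_apply, Finset.mul_sum, Fintype.sum_eq_single i, ← map_mul, one_mul]
  intro j hj
  simpa using apply_mul_mul_apply_eq_zero (horth hj.symm) 1 1 (b j)

theorem isCornerEmbedding_piCornerHom (hψ : ∀ i, IsCornerEmbedding (ψ i)) :
    IsCornerEmbedding (piCornerHom ψ horth) where
  injective b c h := funext fun i ↦ (hψ i).injective <| by
    rw [← apply_one_mul_piCornerHom_mul (horth := horth), h, apply_one_mul_piCornerHom_mul]
  exists_apply_eq a := by
    choose b hb using fun i ↦ (hψ i).exists_apply_eq a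
    refine ⟨b, ?_⟩
    simp only [piCornerHom_apply, hb, Finset.sum_mul, Finset.mul_sum, Pi.one_apply]
    exact Finset.sum_congr rfl fun j _ ↦ (Fintype.sum_eq_single j fun i hij ↦ horth hij a).symm

end Peirce

section SkewGroupAlgebra

open MulAction
open scoped MonoidAlgebra

variable {R : Type*} [CommRing R] {A : Type*} [Ring A] [Algebra R A]
  {G : Type*} [Group G] {X : Type*} [Fintype X] [MulAction G X]

/-- `A` is the skew group algebra of `G` over the algebra `R ^ X` of functions on the `G`-set `X`:
`e x` is the indicator function of `x`, and `u g` is the group element `g`. -/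
structure IsSkewGroupAlgebra (R : Type*) [CommRing R] [Algebra R A] (e : X → A) (u : G →* A) :
    Prop extends CompleteOrthogonalIdempotents e where
  mul_eq_smul_mul (g : G) (x : X) : u g * e x = e (g • x) * u g
  span_eq_top : Submodule.span R (Set.range fun z : X × G ↦ e z.1 * u z.2) = ⊤
  linearIndependent (x : X) : LinearIndependent R fun g : G ↦ e x * u g

namespace IsSkewGroupAlgebra

variable {e : X → A} {u : G →* A} (h : IsSkewGroupAlgebra R e u)

include h

theorem commute_lift {x : X} (b : R[stabilizer G x]) :
    Commute (e x) (MonoidAlgebra.lift R A _ (u.comp (stabilizer G x).subtype) b) := by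
  induction b using MonoidAlgebra.induction_linear with
  | zero => rw [map_zero]; exact .zero_right _
  | add b c hb hc => rw [map_add]; exact hb.add_right hc
  | single g r =>
    rw [MonoidAlgebra.lift_single]
    exact .smul_right ((h.mul_eq_smul_mul g x).trans (by rw [g.2])).symm r

/-- The homomorphism `g ↦ e x * u g` from the group algebra of the stabilizer of `x`. -/
noncomputable def stabilizerHom (x : X) : R[stabilizer G x] →ₙₐ[R] A where
  toFun b := e x * MonoidAlgebra.lift R A _ (u.comp (stabilizer G x).subtype) b
  map_smul' r b := by rw [map_smul, mul_smul_comm, MonoidHom.id_apply]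
  map_zero' := by rw [map_zero, mul_zero]
  map_add' b c := by rw [map_add, mul_add]
  map_mul' b c := by
    rw [map_mul, ← mul_assoc, ← mul_assoc, mul_assoc (e x) _ (e x), ← (h.commute_lift b).eq,
      ← mul_assoc, (h.idem x).eq]

theorem stabilizerHom_eq_linearCombination (x : X) (b : R[stabilizer G x]) :
    h.stabilizerHom x b =
      Finsupp.linearCombination R (fun g : stabilizer G x ↦ e x * u g) b.coeff := by
  simp only [Finsupp.linearCombination_apply, ← mul_smul_comm, ← Finsupp.mul_sum]
  exact congr_arg (e x * ·) (MonoidAlgebra.lift_apply ..)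

theorem stabilizerHom_single (x : X) (g : stabilizer G x) (r : R) :
    h.stabilizerHom x (.single g r) = r • (e x * u g) := by
  rw [stabilizerHom_eq_linearCombination, MonoidAlgebra.coeff_single,
    Finsupp.linearCombination_single]

theorem stabilizerHom_one (x : X) : h.stabilizerHom x 1 = e x := by
  rw [MonoidAlgebra.one_def, stabilizerHom_single, one_smul, OneMemClass.coe_one, map_one, mul_one]

theorem mul_mul_mul_of_ne {x y z : X} {g : G} (hxyz : ¬(x = z ∧ z = g • y)) :
    e x * (e z * u g) * e y = 0 := by
  rw [mul_assoc, mul_assoc, h.mul_eq_smul_mul, ← mul_assoc, ← mul_assoc]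
  obtain hxz | hzy := not_and_or.1 hxyz
  · rw [h.ortho hxz, zero_mul, zero_mul]
  · rw [mul_assoc (e x), h.ortho hzy, mul_zero, zero_mul]

theorem mul_mul_eq_zero {x y : X} (hxy : x ∉ orbit G y) (a : A) : e x * a * e y = 0 := by
  suffices LinearMap.mulLeftRight R (e x, e y) = 0 from DFunLike.congr_fun this a
  refine LinearMap.ext_on_range h.span_eq_top fun z ↦ h.mul_mul_mul_of_ne ?_
  rintro ⟨rfl, hy⟩
  exact hxy ⟨z.2, hy.symm⟩

theorem isCornerEmbedding_stabilizerHom (x : X) : IsCornerEmbedding (h.stabilizerHom x) where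
  injective b c hbc := by
    have hli := (h.linearIndependent x).comp _ (stabilizer G x).subtype_injective
    rw [stabilizerHom_eq_linearCombination, stabilizerHom_eq_linearCombination] at hbc
    exact MonoidAlgebra.coeff_injective (hli.finsuppLinearCombination_injective hbc)
  exists_apply_eq a := by
    rw [h.stabilizerHom_one]
    suffices ⊤ ≤ (LinearMap.range (h.stabilizerHom x : R[stabilizer G x] →ₗ[R] A)).comap
      (LinearMap.mulLeftRight R (e x, e x)) from this trivial
    rw [← h.span_eq_top, Submodule.span_le]
    rintro _ ⟨⟨z, g⟩, rfl⟩
    by_cases hg : x = z ∧ z = g • x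
    · obtain ⟨rfl, hg⟩ := hg
      refine ⟨.single ⟨g, hg.symm⟩ 1, (h.stabilizerHom_single ..).trans ?_⟩
      have hcomm : u g * e x = e x * u g := by rw [h.mul_eq_smul_mul, ← hg]
      simp only [one_smul, LinearMap.mulLeftRight_apply, mul_assoc, hcomm]
      simp only [← mul_assoc, (h.idem x).eq]
    · exact ⟨0, (map_zero _).trans (h.mul_mul_mul_of_ne hg).symm⟩

theorem span_sum_eq_top {ι : Type*} [Fintype ι] {x : ι → X} (hinj : Function.Injective x)
    (hx : ∀ y, ∃ i, y ∈ orbit G (x i)) : TwoSidedIdeal.span {∑ i, e (x i)} = ⊤ := by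
  set I := TwoSidedIdeal.span {∑ i, e (x i)}
  have mem_rep (i : ι) : e (x i) ∈ I := by
    have hmul : e (x i) * ∑ j, e (x j) = e (x i) :=
      (h.embedding ⟨x, hinj⟩).mul_sum_of_mem (Finset.mem_univ i)
    exact hmul ▸ I.mul_mem_left _ _ (TwoSidedIdeal.subset_span rfl)
  have mem (y : X) : e y ∈ I := by
    obtain ⟨i, g, rfl⟩ := hx y
    have hconj : u g * e (x i) * u g⁻¹ = e (g • x i) := by
      rw [h.mul_eq_smul_mul, mul_assoc, ← map_mul, mul_inv_cancel, map_one, mul_one]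
    exact hconj ▸ I.mul_mem_right _ _ (I.mul_mem_left _ _ (mem_rep i))
  exact I.eq_top (h.complete ▸ sum_mem fun y _ ↦ mem y)

theorem isMoritaEquivalent {ι : Type*} {x : ι → X} (hx : ∀ y, ∃! i, y ∈ orbit G (x i)) :
    IsMoritaEquivalent R A (Π i, R[stabilizer G (x i)]) := by
  have hinj : Function.Injective x := fun i j hij ↦
    (hx (x i)).unique (mem_orbit_self _) (hij ▸ mem_orbit_self _)
  have := Fintype.ofInjective x hinj
  have horth : Pairwise fun i j ↦ ∀ a,
      h.stabilizerHom (x i) 1 * a * h.stabilizerHom (x j) 1 = 0 := by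
    simp only [h.stabilizerHom_one]
    exact fun i j hij ↦ h.mul_mul_eq_zero fun hi ↦ hij <|
      (hx (x i)).unique (mem_orbit_self _) hi
  refine (isCornerEmbedding_piCornerHom (horth := horth) fun i ↦
    h.isCornerEmbedding_stabilizerHom (x i)).isMoritaEquivalent ?_
  simpa only [piCornerHom_apply, Pi.one_apply, h.stabilizerHom_one] using
    h.span_sum_eq_top hinj fun y ↦ (hx y).exists

end IsSkewGroupAlgebra

end SkewGroupAlgebra

section CharacterIdempotents

variable {R : Type*} [CommRing R] {N : Type*} [Group N] [Fintype N]

/-- The family `χ` of linear characters of the finite group `N` is a complete character table: it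
has as many members as `N` and satisfies the two orthogonality relations. -/
structure IsCharacterTable {X : Type*} [Fintype X] (χ : X → N →* R) : Prop where
  card_eq : Fintype.card X = Fintype.card N
  sum_inv_mul_eq_zero {x y : X} (hxy : x ≠ y) : ∑ n, χ x n⁻¹ * χ y n = 0
  sum_apply_eq_zero {n : N} (hn : n ≠ 1) : ∑ x, χ x n = 0

namespace IsCharacterTable

theorem pi {X : Type*} [Fintype X] {χ : X → N →* R} (hχ : IsCharacterTable χ)
    {α : Type*} [Fintype α] [DecidableEq α] :
    IsCharacterTable fun x : α → X ↦ ∏ a, (χ (x a)).comp (Pi.evalMonoidHom (fun _ : α ↦ N) a) where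
  card_eq := by simp only [Fintype.card_fun, hχ.card_eq]
  sum_inv_mul_eq_zero {x y} hxy := by
    obtain ⟨a, ha⟩ := Function.ne_iff.1 hxy
    simp only [MonoidHom.finsetProd_apply, ← Finset.prod_mul_distrib, MonoidHom.comp_apply,
      Pi.evalMonoidHom_apply, Pi.inv_apply]
    rw [← Fintype.prod_sum fun a n ↦ χ (x a) n⁻¹ * χ (y a) n]
    exact Finset.prod_eq_zero (Finset.mem_univ a) (hχ.sum_inv_mul_eq_zero ha)
  sum_apply_eq_zero {n} hn := by
    obtain ⟨a, ha⟩ := Function.ne_iff.1 hn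
    simp only [MonoidHom.finsetProd_apply, MonoidHom.comp_apply, Pi.evalMonoidHom_apply]
    rw [← Fintype.prod_sum fun a x ↦ χ x (n a)]
    exact Finset.prod_eq_zero (Finset.mem_univ a) (hχ.sum_apply_eq_zero ha)

end IsCharacterTable

variable {A : Type*} [Ring A] [Algebra R A] [Invertible (Fintype.card N : R)]

/-- The idempotent of a linear character `χ` of `N`, in an algebra to which `N` maps. -/
def characterIdempotent (v : N →* A) (χ : N →* R) : A :=
  ⅟(Fintype.card N : R) • ∑ n, χ n⁻¹ • v n

theorem apply_mul_characterIdempotent (v : N →* A) (χ : N →* R) (n : N) :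
    v n * characterIdempotent v χ = χ n • characterIdempotent v χ := by
  rw [characterIdempotent, mul_smul_comm, smul_comm (χ n), Finset.mul_sum,
    Finset.smul_sum (r := χ n)]
  refine congr_arg (_ • ·) (Fintype.sum_equiv (Equiv.mulLeft n) _ _ fun m ↦ ?_)
  rw [Equiv.coe_mulLeft, mul_smul_comm, ← map_mul, smul_smul, mul_comm (χ n), ← map_mul,
    mul_inv_rev, inv_mul_cancel_right]

namespace IsCharacterTable

variable {X : Type*} [Fintype X] {χ : X → N →* R} (hχ : IsCharacterTable χ)

include hχ

theorem completeOrthogonalIdempotents (v : N →* A) :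
    CompleteOrthogonalIdempotents fun x ↦ characterIdempotent v (χ x) := by
  refine CompleteOrthogonalIdempotents.iff_ortho_complete.2 ⟨fun x y hxy ↦ ?_, ?_⟩
  · change characterIdempotent v (χ x) * characterIdempotent v (χ y) = 0
    rw [characterIdempotent, smul_mul_assoc, Finset.sum_mul]
    simp only [smul_mul_assoc, apply_mul_characterIdempotent, smul_smul, ← Finset.sum_smul]
    rw [hχ.sum_inv_mul_eq_zero hxy, mul_zero, zero_smul]
  · simp only [characterIdempotent, ← Finset.smul_sum]
    rw [Finset.sum_comm]
    simp only [← Finset.sum_smul]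
    rw [Fintype.sum_eq_single 1 fun n hn ↦ by
      rw [hχ.sum_apply_eq_zero (inv_ne_one.2 hn), zero_smul]]
    simp [hχ.card_eq, smul_smul]

variable {G : Type*} [Group G] [MulAction G X] [MulDistribMulAction G N]

theorem isSkewGroupAlgebra {v : N →* A} {u : G →* A} (b : Module.Basis (N × G) R A)
    (hb : ∀ n g, b (n, g) = v n * u g) (hconj : ∀ g n, u g * v n = v (g • n) * u g)
    (hsmul : ∀ (g : G) x n, χ (g • x) (g • n) = χ x n) :
    IsSkewGroupAlgebra R (fun x ↦ characterIdempotent v (χ x)) u where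
  toCompleteOrthogonalIdempotents := hχ.completeOrthogonalIdempotents v
  mul_eq_smul_mul g x := by
    simp only [characterIdempotent, mul_smul_comm, smul_mul_assoc, Finset.mul_sum, Finset.sum_mul,
      hconj]
    refine congr_arg (_ • ·) (Fintype.sum_equiv (MulAction.toPerm g) _ _ fun n ↦ ?_)
    rw [MulAction.toPerm_apply, ← smul_inv', hsmul]
  span_eq_top := by
    rw [eq_top_iff, ← b.span_eq, Submodule.span_le]
    rintro _ ⟨⟨n, g⟩, rfl⟩
    have hsum : b (n, g) = ∑ x, χ x n • (characterIdempotent v (χ x) * u g) := by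
      simp only [← smul_mul_assoc, ← apply_mul_characterIdempotent, ← Finset.sum_mul,
        ← Finset.mul_sum, (hχ.completeOrthogonalIdempotents v).complete, mul_one, hb]
    rw [hsum]
    exact sum_mem fun x _ ↦ Submodule.smul_mem _ _ (Submodule.subset_span ⟨(x, g), rfl⟩)
  linearIndependent x := by
    have hcoord (g g' : G) : b.coord (1, g) (characterIdempotent v (χ x) * u g') =
        ⅟(Fintype.card N : R) * Finsupp.single g' 1 g := by
      simp only [characterIdempotent, smul_mul_assoc, Finset.sum_mul, ← hb, map_smul, map_sum,
        Module.Basis.coord_apply, b.repr_self, smul_eq_mul]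
      congr 1
      rw [Fintype.sum_eq_single 1 fun n hn ↦ by
        rw [Finsupp.single_eq_of_ne (by simp [hn.symm]), mul_zero]]
      classical simp [Finsupp.single_apply]
    refine LinearIndependent.of_pairwise_dual_eq_zero_one _
      (fun g ↦ (Fintype.card N : R) • b.coord (1, g)) (fun g g' hg ↦ ?_) fun g ↦ ?_
    · change (Fintype.card N : R) • b.coord (1, g) (characterIdempotent v (χ x) * u g') = 0
      rw [hcoord, Finsupp.single_eq_of_ne hg, mul_zero, smul_zero]
    · rw [LinearMap.smul_apply, hcoord, Finsupp.single_eq_same, mul_one, smul_eq_mul,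
        mul_invOf_self]

open scoped MonoidAlgebra in
theorem isMoritaEquivalent {H : Type*} [Group H] {v : N →* H} {u : G →* H}
    (hvu : Function.Bijective fun z : N × G ↦ v z.1 * u z.2)
    (hconj : ∀ g n, u g * v n = v (g • n) * u g)
    (hsmul : ∀ (g : G) x n, χ (g • x) (g • n) = χ x n)
    {ι : Type*} {x : ι → X} (hx : ∀ y, ∃! i, y ∈ MulAction.orbit G (x i)) :
    IsMoritaEquivalent R R[H] (Π i, R[MulAction.stabilizer G (x i)]) := by
  let b := (MonoidAlgebra.basis H R).reindex (Equiv.ofBijective _ hvu).symm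
  have hb (n : N) (g : G) : b (n, g) = (MonoidAlgebra.of R H).comp v n *
      (MonoidAlgebra.of R H).comp u g := by
    rw [Module.Basis.reindex_apply, MonoidAlgebra.basis_apply, MonoidHom.comp_apply,
      MonoidHom.comp_apply, ← map_mul]
    rfl
  refine (hχ.isSkewGroupAlgebra b hb (fun g n ↦ ?_) hsmul).isMoritaEquivalent hx
  simp only [MonoidHom.comp_apply, ← map_mul, hconj]

end IsCharacterTable

end CharacterIdempotents

section TwoColorings

open MulAction Equiv

attribute [local instance] arrowAction

variable {α : Type*}

theorem mem_stabilizer_iff_forall_apply_eq {β : Type*} {x : α → β} {σ : Perm α} :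
    σ ∈ stabilizer (Perm α) x ↔ ∀ a, x (σ a) = x a := by
  rw [← inv_mem_iff, mem_stabilizer_iff, funext_iff]
  rfl

theorem range_subtypeCongrHom (x : α → Bool) :
    (Perm.subtypeCongrHom (x ·)).range = stabilizer (Perm α) x := by
  ext σ
  rw [mem_stabilizer_iff_forall_apply_eq]
  constructor
  · rintro ⟨⟨σ₁, σ₂⟩, rfl⟩ a
    change x (σ₁.subtypeCongr σ₂ a) = x a
    by_cases ha : x a
    · rw [Perm.subtypeCongr.left_apply (p := (x ·)) _ _ ha, (σ₁ _).2, ha]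
    · rw [Perm.subtypeCongr.right_apply (p := (x ·)) _ _ ha,
        Bool.eq_false_of_not_eq_true (σ₂ _).2, Bool.eq_false_of_not_eq_true ha]
  · refine fun h ↦ ⟨(σ.subtypePerm fun a ↦ by rw [h], σ.subtypePerm fun a ↦ by rw [h]), ?_⟩
    ext a
    refine (Perm.subtypeCongr.apply ..).trans ?_
    split_ifs <;> rfl

variable [Fintype α]

theorem mem_orbit_iff_card_eq {x y : α → Bool} :
    y ∈ orbit (Perm α) x ↔ Fintype.card {a // x a} = Fintype.card {a // y a} := by
  constructor
  · rintro ⟨σ, rfl⟩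
    exact Fintype.card_congr <| σ.subtypeEquiv fun a ↦ by
      change _ ↔ x (σ⁻¹ (σ a)) = true
      simp
  · intro h
    let e := Fintype.equivOfCardEq h
    refine ⟨e.extendSubtype, funext fun a ↦ ?_⟩
    obtain ⟨a, rfl⟩ := e.extendSubtype.surjective a
    change x (e.extendSubtype⁻¹ (e.extendSubtype a)) = _
    rw [Perm.inv_def, symm_apply_apply, Bool.eq_iff_iff]
    exact ⟨e.extendSubtype_mem a, not_imp_not.1 (e.extendSubtype_not_mem a)⟩

/-- The stabilizer of a two-coloring of `α` is the Young subgroup of its color classes. -/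
noncomputable def stabilizerColoringEquiv (x : α → Bool) {k l : ℕ}
    (hk : Fintype.card {a // x a} = k) (hl : Fintype.card {a // ¬x a} = l) :
    stabilizer (Perm α) x ≃* Perm (Fin k) × Perm (Fin l) :=
  (MulEquiv.subgroupCongr (range_subtypeCongrHom x)).symm.trans <|
    (MonoidHom.ofInjective (Perm.subtypeCongrHom_injective _)).symm.trans <|
      (Fintype.equivFinOfCardEq hk).permCongrHom.prodCongr
        (Fintype.equivFinOfCardEq hl).permCongrHom

/-- The two-coloring of `Fin n` in which the first `i` points are `true`; it stands for the
character `χ_i` of `C₂ ^ n`. -/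
def initialColoring {n : ℕ} (i : Fin (n + 1)) (j : Fin n) : Bool :=
  decide (j.val < i.val)

theorem card_initialColoring {n : ℕ} (i : Fin (n + 1)) :
    Fintype.card {j : Fin n // initialColoring i j} = i := by
  simp only [initialColoring, decide_eq_true_eq, Fintype.card_subtype, Fin.card_filter_val_lt]
  exact min_eq_right i.is_le

theorem card_not_initialColoring {n : ℕ} (i : Fin (n + 1)) :
    Fintype.card {j : Fin n // ¬initialColoring i j} = n - i := by
  rw [Fintype.card_subtype_compl, card_initialColoring, Fintype.card_fin]

theorem existsUnique_mem_orbit_initialColoring {n : ℕ} (y : Fin n → Bool) :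
    ∃! i : Fin (n + 1), y ∈ orbit (Perm (Fin n)) (initialColoring i) := by
  simp only [mem_orbit_iff_card_eq, card_initialColoring]
  have hlt : Fintype.card {j // y j} < n + 1 :=
    Nat.lt_succ_of_le <| (Fintype.card_subtype_le _).trans_eq (Fintype.card_fin n)
  exact ⟨⟨_, hlt⟩, rfl, fun i hi ↦ Fin.ext hi⟩

end TwoColorings

section Hyperoctahedral

open Equiv

attribute [local instance] arrowAction arrowMulDistribMulAction

theorem prod_comp_eval_smul_apply_smul {M N X α G : Type*} [CommMonoid M] [Monoid N] [Fintype α]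
    [Group G] [MulAction G α] (χ : X → N →* M) (g : G) (x : α → X) (s : α → N) :
    (∏ a, (χ ((g • x) a)).comp (Pi.evalMonoidHom (fun _ ↦ N) a)) (g • s) =
      (∏ a, (χ (x a)).comp (Pi.evalMonoidHom (fun _ ↦ N) a)) s := by
  simp only [MonoidHom.finsetProd_apply, MonoidHom.comp_apply, Pi.evalMonoidHom_apply]
  exact Equiv.prod_comp (MulAction.toPerm g⁻¹) fun a ↦ χ (x a) (s a)

/-- The two characters of `C₂`, realized as the group of permutations of `Bool`: `true` stands for
the trivial character. -/
def boolCharacter (R : Type*) [CommRing R] : Bool → Perm Bool →* R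
  | true => 1
  | false => (Int.castRingHom R : ℤ →* R).comp ((Units.coeHom ℤ).comp Perm.sign)

theorem isCharacterTable_boolCharacter (R : Type*) [CommRing R] :
    IsCharacterTable (boolCharacter R) where
  card_eq := by decide
  sum_inv_mul_eq_zero {x y} hxy := by
    have huniv : (Finset.univ : Finset (Perm Bool)) = {1, swap true false} := by decide
    rw [huniv, Finset.sum_pair (by decide)]
    cases x <;> cases y <;> simp_all [boolCharacter]
  sum_apply_eq_zero {n} hn := by
    obtain rfl : n = swap true false := by decide +revert
    simp [boolCharacter]

variable {n : ℕ}

theorem mem_hyperoct_iff {g : Perm (Fin n × Bool)} :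
    g ∈ hyperoct n ↔ ∀ i b, g (i, !b) = ((g (i, b)).1, !(g (i, b)).2) := by
  rw [hyperoct, Subgroup.mem_centralizer_singleton_iff, Perm.ext_iff, Prod.forall]
  rfl

/-- The inclusion of the base group `C₂ ^ n` into the hyperoctahedral group. -/
def hyperoctBase (n : ℕ) : (Fin n → Perm Bool) →* hyperoct n where
  toFun s := ⟨prodCongrRight s, mem_hyperoct_iff.2 fun i b ↦ by
    have : ∀ (s : Perm Bool) b, s (!b) = !s b := by decide
    simp [this]⟩
  map_one' := rfl
  map_mul' _ _ := rfl

/-- The inclusion of `S_n` into the hyperoctahedral group. -/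
def hyperoctTop (n : ℕ) : Perm (Fin n) →* hyperoct n where
  toFun σ := ⟨prodCongr σ (Equiv.refl Bool), mem_hyperoct_iff.2 fun _ _ ↦ rfl⟩
  map_one' := rfl
  map_mul' _ _ := rfl

theorem hyperoctTop_mul_hyperoctBase (σ : Perm (Fin n)) (s : Fin n → Perm Bool) :
    hyperoctTop n σ * hyperoctBase n s = hyperoctBase n (σ • s) * hyperoctTop n σ := by
  refine Subtype.ext <| Equiv.ext fun ⟨i, b⟩ ↦ Prod.ext rfl ?_
  change s i b = s (σ⁻¹ (σ i)) b
  rw [Perm.inv_def, symm_apply_apply]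

theorem fst_apply_eq_of_mem_hyperoct {g : Perm (Fin n × Bool)} (hg : g ∈ hyperoct n) (i : Fin n)
    (b c : Bool) : (g (i, b)).1 = (g (i, c)).1 := by
  have h := mem_hyperoct_iff.1 hg i c
  obtain rfl | rfl := Bool.eq_or_eq_not b c
  · rfl
  · rw [h]

theorem exists_fst_apply_eq_of_mem_hyperoct {g : Perm (Fin n × Bool)} (hg : g ∈ hyperoct n) :
    ∃ σ : Perm (Fin n), ∀ i b, (g (i, b)).1 = σ i := by
  have hsurj : Function.Surjective fun i ↦ (g (i, true)).1 := fun j ↦ by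
    obtain ⟨⟨i, b⟩, hib⟩ := g.surjective (j, true)
    exact ⟨i, (fst_apply_eq_of_mem_hyperoct hg i true b).trans (congr_arg Prod.fst hib)⟩
  exact ⟨.ofBijective _ ⟨Finite.injective_iff_surjective.2 hsurj, hsurj⟩,
    fun i b ↦ fst_apply_eq_of_mem_hyperoct hg i b true⟩

theorem hyperoctBase_mul_hyperoctTop_bijective :
    Function.Bijective fun z : (Fin n → Perm Bool) × Perm (Fin n) ↦
      hyperoctBase n z.1 * hyperoctTop n z.2 := by
  constructor
  · rintro ⟨s, σ⟩ ⟨t, τ⟩ h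
    have happly (i : Fin n) (b : Bool) : σ i = τ i ∧ s (σ i) b = t (τ i) b :=
      Prod.ext_iff.1 (DFunLike.congr_fun (congr_arg Subtype.val h) (i, b))
    obtain rfl : σ = τ := Equiv.ext fun i ↦ (happly i true).1
    obtain rfl : s = t := funext <| σ.surjective.forall.2 fun i ↦ Equiv.ext fun b ↦ (happly i b).2
    rfl
  · rintro ⟨g, hg⟩
    obtain ⟨σ, hσ⟩ := exists_fst_apply_eq_of_mem_hyperoct hg
    have hinj (i : Fin n) : Function.Injective fun b ↦ (g (i, b)).2 := fun b c hbc ↦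
      congr_arg Prod.snd <| g.injective <| Prod.ext ((hσ i b).trans (hσ i c).symm) hbc
    let s (j : Fin n) : Perm Bool :=
      .ofBijective _ (Finite.injective_iff_bijective.1 (hinj (σ⁻¹ j)))
    refine ⟨(s, σ), Subtype.ext <| Equiv.ext fun ⟨i, b⟩ ↦ Prod.ext (hσ i b).symm ?_⟩
    change (g (σ⁻¹ (σ i), b)).2 = (g (i, b)).2
    rw [Perm.inv_def, symm_apply_apply]

theorem morita_hyperoctahedral_general {R : Type*} [CommRing R] (h2 : IsUnit (2 : R)) (n : ℕ) :
    IsMoritaEquivalent R (MonoidAlgebra R (hyperoct n))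
      (Π i : Fin (n + 1),
        MonoidAlgebra R (Equiv.Perm (Fin (i : ℕ)) × Equiv.Perm (Fin (n - (i : ℕ))))) := by
  have hcard : IsUnit (Fintype.card (Fin n → Perm Bool) : R) := by
    simpa [Fintype.card_perm] using h2.pow n
  let := hcard.invertible
  have hmorita := (isCharacterTable_boolCharacter R).pi.isMoritaEquivalent
    (hyperoctBase_mul_hyperoctTop_bijective (n := n)) hyperoctTop_mul_hyperoctBase
    (prod_comp_eval_smul_apply_smul (boolCharacter R)) existsUnique_mem_orbit_initialColoring
  exact hmorita.trans R <| .of_algEquiv R <| .piCongrRight fun i ↦ MonoidAlgebra.domCongr R R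
    (stabilizerColoringEquiv _ (card_initialColoring i) (card_not_initialColoring i))

end Hyperoctahedral

/-- `F[C₂ ≀ Sₙ]` is Morita equivalent to `⊕_{i=0}^n F[Sᵢ × S_{n-i}]`. -/
theorem morita_hyperoctahedral (F : Type) [Field F] (p : ℕ) (hp : p.Prime)
    (hodd : Odd p) [CharP F p] (n : ℕ) :
    Nonempty
      (ModuleCat.{0} (MonoidAlgebra F (hyperoct n)) ≌
        ModuleCat.{0}
          (Π i : Fin (n + 1),
            MonoidAlgebra F (Equiv.Perm (Fin (i : ℕ)) × Equiv.Perm (Fin (n - (i : ℕ)))))) := by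
  have h2 : (2 : F) ≠ 0 := Ring.two_ne_zero <| by
    rw [ringChar.eq F p]
    rintro rfl
    exact absurd hodd (by decide)
  exact (morita_hyperoctahedral_general h2.isUnit n).cond.map (·.eqv)
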